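/- Let n ≥ 2, ε ∈ (0, 1/2), let T ∈ ℝ^{n×n} be symmetric with ‖T‖ ≤ 1, let Λ̃ ∈ ℝ^{n×n} be diagonal, and let Ũ ∈ ℝ^{n×n} satisfy ‖Ũᵀ Ũ − I‖ ≤ ε/n² and ‖T − Ũ Λ̃ Ũᵀ‖ ≤ ε. Then: (i) ‖Λ̃‖ ≤ (1+ε)/(1 − ε/n²); and (ii) for every orthogonal matrix U ∈ ℝ^{n×n} with ‖Ũ − U‖ ≤ ε/n² (at least one such U exists), one has ‖T − U Λ̃ Uᵀ‖ ≤ ε · (1 + (1+ε)(2 + ε/n²)/(n² − ε)); in particular ‖T − U Λ̃ Uᵀ‖ ≤ 2ε. -/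

import Mathlib

/-!
In the C⋆-algebra of real matrices with the spectral norm, write `δ = ε / n²` and `G = Uᵀ U`, so
that `‖G - 1‖ ≤ δ < 1`. Then `G` is invertible with `‖G⁻¹‖ ≤ 1 / (1 - δ)`, and the C⋆-identity gives
`‖U⁻¹‖² = ‖U⁻¹ U⁻ᵀ‖ = ‖G⁻¹‖`. Writing `Λ = U⁻¹ (U Λ Uᵀ) U⁻ᵀ` bounds `‖Λ‖` by
`‖U Λ Uᵀ‖ / (1 - δ) ≤ (1 + ε) / (1 - δ)` (`norm_le_of_conj`).

The orthogonal matrix near `U` is its polar factor `V = U G^(-1/2)`: diagonalizing `G`, the distance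
`‖U - V‖` is the maximum of `|√d - 1|` over the eigenvalues `d` of `G`, and
`|√d - 1| ≤ |d - 1| ≤ δ` (`exists_orthogonal_near`).

Finally `U Λ Uᵀ - V Λ Vᵀ = (U - V) Λ Uᵀ + V Λ (U - V)ᵀ` has norm at most `δ ‖Λ‖ (2 + δ)`
(`norm_conj_sub_conj_le`), and the bound on `‖Λ‖` finishes the estimate.
-/

open Matrix

/-- The spectral norm (largest singular value) of a matrix. -/
noncomputable def specNorm {𝕜 : Type*} [RCLike 𝕜] {p q : Type*} [Fintype p] [Fintype q]
    [DecidableEq q] (A : Matrix p q 𝕜) : ℝ :=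
  ‖LinearMap.toContinuousLinearMap (Matrix.toEuclideanLin A)‖

open scoped Matrix.Norms.L2Operator

section Helpers

variable {m : Type*} [Fintype m] [DecidableEq m]

lemma specNorm_eq_norm (A : Matrix m m ℝ) : specNorm A = ‖A‖ := rfl

lemma norm_transpose_real (A : Matrix m m ℝ) : ‖Aᵀ‖ = ‖A‖ := by
  rw [← Matrix.conjTranspose_eq_transpose_of_trivial, Matrix.l2_opNorm_conjTranspose]

lemma norm_transpose_mul_self_real (A : Matrix m m ℝ) : ‖Aᵀ * A‖ = ‖A‖ * ‖A‖ := by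
  rw [← Matrix.conjTranspose_eq_transpose_of_trivial, Matrix.l2_opNorm_conjTranspose_mul_self]

lemma norm_one_le_real : ‖(1 : Matrix m m ℝ)‖ ≤ 1 := by
  rw [← Matrix.diagonal_one, Matrix.l2_opNorm_diagonal]
  exact (pi_norm_le_iff_of_nonneg zero_le_one).2 fun i => by simp

lemma norm_le_one_of_orthogonal {V : Matrix m m ℝ} (hV : Vᵀ * V = 1) : ‖V‖ ≤ 1 := by
  have h := norm_transpose_mul_self_real V
  rw [hV] at h
  nlinarith [norm_one_le_real (m := m), norm_nonneg V]

/-- Conjugation by a nearly orthogonal matrix shrinks the norm by a factor at least `1 - δ`. -/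
lemma norm_le_of_conj {U L : Matrix m m ℝ} {δ : ℝ} (hδ : δ < 1) (hU : ‖Uᵀ * U - 1‖ ≤ δ) :
    ‖L‖ * (1 - δ) ≤ ‖U * L * Uᵀ‖ := by
  have hunit : IsUnit (Uᵀ * U) := by
    have h : ‖1 - Uᵀ * U‖ < 1 := by rw [norm_sub_rev]; linarith
    simpa using isUnit_one_sub_of_norm_lt_one h
  have hdet : IsUnit U.det := by
    have h := (Matrix.isUnit_iff_isUnit_det _).1 hunit
    rw [Matrix.det_mul] at h
    exact isUnit_of_mul_isUnit_right h
  have hdetT : IsUnit Uᵀ.det := by rwa [Matrix.det_transpose]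
  set W := U⁻¹ with hW
  have hWU : W * U = 1 := Matrix.nonsing_inv_mul U hdet
  have hUW : U * W = 1 := Matrix.mul_nonsing_inv U hdet
  have hUWT : Uᵀ * Wᵀ = 1 := by rw [← Matrix.transpose_mul, hWU, Matrix.transpose_one]
  -- `W * Wᵀ` is the inverse of `Uᵀ * U`; this form bounds its norm without a Neumann series.
  have hX : W * Wᵀ = 1 - (Uᵀ * U - 1) * (W * Wᵀ) := by
    have : Uᵀ * U * (W * Wᵀ) = 1 := by
      rw [Matrix.mul_assoc, ← Matrix.mul_assoc U, hUW, Matrix.one_mul, hUWT]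
    rw [Matrix.sub_mul, this, Matrix.one_mul]; abel
  have hXn : ‖W * Wᵀ‖ * (1 - δ) ≤ 1 := by
    have h1 : ‖W * Wᵀ‖ ≤ 1 + δ * ‖W * Wᵀ‖ := by
      calc ‖W * Wᵀ‖ = ‖1 - (Uᵀ * U - 1) * (W * Wᵀ)‖ := congrArg _ hX
        _ ≤ ‖(1 : Matrix m m ℝ)‖ + ‖(Uᵀ * U - 1) * (W * Wᵀ)‖ := norm_sub_le _ _
        _ ≤ 1 + δ * ‖W * Wᵀ‖ := by
          gcongr
          · exact norm_one_le_real
          · exact (norm_mul_le _ _).trans (by gcongr)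
    linarith
  have hWW : ‖W * Wᵀ‖ = ‖W‖ * ‖W‖ := by
    simpa [norm_transpose_real] using norm_transpose_mul_self_real Wᵀ
  have hL : L = W * (U * L * Uᵀ) * Wᵀ := by
    have : W * (U * L * Uᵀ) * Wᵀ = (W * U) * L * (Uᵀ * Wᵀ) := by simp only [Matrix.mul_assoc]
    rw [this, hWU, hUWT, Matrix.one_mul, Matrix.mul_one]
  have hLn : ‖L‖ ≤ ‖W * Wᵀ‖ * ‖U * L * Uᵀ‖ := by
    calc ‖L‖ = ‖W * (U * L * Uᵀ) * Wᵀ‖ := congrArg _ hL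
      _ ≤ ‖W‖ * ‖U * L * Uᵀ‖ * ‖Wᵀ‖ := norm_mul₃_le
      _ = ‖W * Wᵀ‖ * ‖U * L * Uᵀ‖ := by rw [hWW, norm_transpose_real]; ring
  calc ‖L‖ * (1 - δ) ≤ ‖W * Wᵀ‖ * ‖U * L * Uᵀ‖ * (1 - δ) := by
        have : 0 ≤ 1 - δ := by linarith
        gcongr
    _ = (‖W * Wᵀ‖ * (1 - δ)) * ‖U * L * Uᵀ‖ := by ring
    _ ≤ 1 * ‖U * L * Uᵀ‖ := by gcongr
    _ = _ := one_mul _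

lemma exists_orthogonal_diagonalization {G : Matrix m m ℝ} (hG : G.IsSymm) :
    ∃ (Q : Matrix m m ℝ) (d : m → ℝ), Qᵀ * Q = 1 ∧ Q * Qᵀ = 1 ∧ Qᵀ * G * Q = diagonal d := by
  have hH : G.IsHermitian := by
    rw [Matrix.IsHermitian, Matrix.conjTranspose_eq_transpose_of_trivial]; exact hG
  refine ⟨hH.eigenvectorUnitary, hH.eigenvalues, ?_, ?_, ?_⟩
  · have := Unitary.coe_star_mul_self hH.eigenvectorUnitary
    rwa [Matrix.star_eq_conjTranspose, Matrix.conjTranspose_eq_transpose_of_trivial] at this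
  · have := Unitary.coe_mul_star_self hH.eigenvectorUnitary
    rwa [Unitary.coe_star, Matrix.star_eq_conjTranspose,
      Matrix.conjTranspose_eq_transpose_of_trivial] at this
  · have := hH.conjStarAlgAut_star_eigenvectorUnitary
    rw [Unitary.conjStarAlgAut_star_apply, Matrix.star_eq_conjTranspose,
      Matrix.conjTranspose_eq_transpose_of_trivial] at this
    exact this

/-- The orthogonal polar factor of `U` is as close to `U` as `Uᵀ * U` is to the identity. -/
lemma exists_orthogonal_near {U : Matrix m m ℝ} {δ : ℝ} (hδ : δ < 1)
    (hU : ‖Uᵀ * U - 1‖ ≤ δ) : ∃ V : Matrix m m ℝ, Vᵀ * V = 1 ∧ ‖U - V‖ ≤ δ := by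
  have hδ0 : 0 ≤ δ := (norm_nonneg _).trans hU
  obtain ⟨Q, d, hQ1, hQ2, hQ⟩ := exists_orthogonal_diagonalization
    (G := Uᵀ * U) (by simp [Matrix.IsSymm, Matrix.transpose_mul])
  have hQn : ‖Q‖ ≤ 1 := norm_le_one_of_orthogonal hQ1
  have hQTn : ‖Qᵀ‖ ≤ 1 := by rwa [norm_transpose_real]
  have hd : ∀ i, |d i - 1| ≤ δ := by
    have h1 : diagonal (fun i => d i - 1) = Qᵀ * (Uᵀ * U - 1) * Q := by
      rw [Matrix.mul_sub, Matrix.sub_mul, hQ, Matrix.mul_one, hQ1, ← Matrix.diagonal_one,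
        Matrix.diagonal_sub]
    have h2 : ‖diagonal (fun i => d i - 1)‖ ≤ δ := by
      rw [h1]
      calc ‖Qᵀ * (Uᵀ * U - 1) * Q‖ ≤ ‖Qᵀ‖ * ‖Uᵀ * U - 1‖ * ‖Q‖ := norm_mul₃_le
        _ ≤ 1 * δ * 1 := by gcongr
        _ = δ := by ring
    rw [Matrix.l2_opNorm_diagonal] at h2
    exact (pi_norm_le_iff_of_nonneg hδ0).1 h2
  have hdpos : ∀ i, 0 < d i := fun i => by have := abs_le.1 (hd i); linarith
  set P := U * Q with hP
  have hPP : Pᵀ * P = diagonal d := by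
    rw [← hQ, hP, Matrix.transpose_mul]; simp only [Matrix.mul_assoc]
  have hconj : ∀ c : m → ℝ, (P * diagonal c)ᵀ * (P * diagonal c)
      = diagonal (fun i => c i * d i * c i) := by
    intro c
    rw [Matrix.transpose_mul, Matrix.diagonal_transpose]
    have : diagonal c * Pᵀ * (P * diagonal c) = diagonal c * (Pᵀ * P) * diagonal c := by
      simp only [Matrix.mul_assoc]
    rw [this, hPP, Matrix.diagonal_mul_diagonal, Matrix.diagonal_mul_diagonal]
  have hUP : U = P * diagonal (fun _ => (1 : ℝ)) * Qᵀ := by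
    rw [Matrix.diagonal_one, Matrix.mul_one, hP, Matrix.mul_assoc, hQ2, Matrix.mul_one]
  refine ⟨P * diagonal (fun i => (√(d i))⁻¹) * Qᵀ, ?_, ?_⟩
  · have hone : (fun i => (√(d i))⁻¹ * d i * (√(d i))⁻¹) = fun _ => (1 : ℝ) := by
      funext i
      have hs := Real.sqrt_pos.2 (hdpos i)
      have hss := Real.mul_self_sqrt (hdpos i).le
      field_simp
      nlinarith
    rw [Matrix.transpose_mul, Matrix.transpose_transpose, Matrix.mul_assoc,
      ← Matrix.mul_assoc (P * _)ᵀ, hconj, hone, Matrix.diagonal_one, Matrix.one_mul, hQ2]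
  · set c : m → ℝ := fun i => 1 - (√(d i))⁻¹ with hc
    have hdiff : U - P * diagonal (fun i => (√(d i))⁻¹) * Qᵀ = P * diagonal c * Qᵀ := by
      conv_lhs => rw [hUP]
      rw [← Matrix.sub_mul, ← Matrix.mul_sub, Matrix.diagonal_sub]
    have hPc : ‖P * diagonal c‖ ≤ δ := by
      have h1 : ‖P * diagonal c‖ * ‖P * diagonal c‖ ≤ δ * δ := by
        rw [← norm_transpose_mul_self_real, hconj, Matrix.l2_opNorm_diagonal]
        refine (pi_norm_le_iff_of_nonneg (by positivity)).2 fun i => ?_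
        have hs := Real.sqrt_pos.2 (hdpos i)
        have hss := Real.mul_self_sqrt (hdpos i).le
        have heq : c i * d i * c i = (√(d i) - 1) * (√(d i) - 1) := by
          simp only [hc]
          field_simp
          rw [sq (√(d i)), hss]
          ring
        -- `|√d - 1| ≤ |√d - 1| (√d + 1) = |d - 1|`.
        have hle : |√(d i) - 1| ≤ δ := by
          have hfac : d i - 1 = (√(d i) - 1) * (√(d i) + 1) := by nlinarith
          have h := hd i
          rw [hfac, abs_mul, abs_of_pos (by linarith : 0 < √(d i) + 1)] at h
          nlinarith [abs_nonneg (√(d i) - 1)]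
        rw [heq, Real.norm_eq_abs, abs_mul]
        gcongr
      exact abs_le_of_sq_le_sq' (by nlinarith) hδ0 |>.2
    rw [hdiff]
    calc ‖P * diagonal c * Qᵀ‖ ≤ ‖P * diagonal c‖ * ‖Qᵀ‖ := norm_mul_le _ _
      _ ≤ δ * 1 := by gcongr
      _ = δ := mul_one _

lemma norm_conj_sub_conj_le {U V L : Matrix m m ℝ} {δ : ℝ} (hV : Vᵀ * V = 1)
    (hUV : ‖U - V‖ ≤ δ) : ‖U * L * Uᵀ - V * L * Vᵀ‖ ≤ δ * ‖L‖ * (2 + δ) := by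
  have hδ0 : 0 ≤ δ := (norm_nonneg _).trans hUV
  have hVn := norm_le_one_of_orthogonal hV
  have hUn : ‖U‖ ≤ 1 + δ := by
    calc ‖U‖ = ‖V + (U - V)‖ := by rw [add_sub_cancel]
      _ ≤ ‖V‖ + ‖U - V‖ := norm_add_le _ _
      _ ≤ 1 + δ := by gcongr
  have hdec : U * L * Uᵀ - V * L * Vᵀ = (U - V) * L * Uᵀ + V * L * (U - V)ᵀ := by
    rw [Matrix.transpose_sub, Matrix.sub_mul, Matrix.sub_mul, Matrix.mul_sub]; abel
  rw [hdec]
  calc ‖(U - V) * L * Uᵀ + V * L * (U - V)ᵀ‖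
      ≤ ‖U - V‖ * ‖L‖ * ‖Uᵀ‖ + ‖V‖ * ‖L‖ * ‖(U - V)ᵀ‖ :=
        (norm_add_le _ _).trans (add_le_add norm_mul₃_le norm_mul₃_le)
    _ ≤ δ * ‖L‖ * (1 + δ) + 1 * ‖L‖ * δ := by
        rw [norm_transpose_real, norm_transpose_real]; gcongr
    _ = δ * ‖L‖ * (2 + δ) := by ring

end Helpers

theorem stmt_16 {n : ℕ} (hn : 2 ≤ n) (ε : ℝ) (hε : ε ∈ Set.Ioo (0 : ℝ) (1 / 2))
    (T : Matrix (Fin n) (Fin n) ℝ) (hTsym : T.IsSymm) (hTnorm : specNorm T ≤ 1)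
    (lam : Fin n → ℝ) (U : Matrix (Fin n) (Fin n) ℝ)
    (hUorth : specNorm (Uᵀ * U - 1) ≤ ε / n ^ 2)
    (hT : specNorm (T - U * Matrix.diagonal lam * Uᵀ) ≤ ε) :
    specNorm (Matrix.diagonal lam) ≤ (1 + ε) / (1 - ε / n ^ 2) ∧
    (∃ V : Matrix (Fin n) (Fin n) ℝ, Vᵀ * V = 1 ∧ specNorm (U - V) ≤ ε / n ^ 2) ∧
    ∀ V : Matrix (Fin n) (Fin n) ℝ, Vᵀ * V = 1 → specNorm (U - V) ≤ ε / n ^ 2 →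
      specNorm (T - V * Matrix.diagonal lam * Vᵀ)
          ≤ ε * (1 + (1 + ε) * (2 + ε / n ^ 2) / (n ^ 2 - ε)) ∧
      specNorm (T - V * Matrix.diagonal lam * Vᵀ) ≤ 2 * ε := by
  obtain ⟨hε0, hε1⟩ := hε
  simp only [specNorm_eq_norm] at *
  have hn4 : (4 : ℝ) ≤ (n : ℝ) ^ 2 := by
    have : (2 : ℝ) ≤ n := by exact_mod_cast hn
    nlinarith
  set N : ℝ := (n : ℝ) ^ 2 with hN
  set δ : ℝ := ε / N with hδ
  have hN0 : 0 < N := by linarith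
  have hδN : δ * N = ε := by rw [hδ]; field_simp
  have hδ0 : 0 < δ := by positivity
  have hδ1 : δ ≤ 1 / 8 := by nlinarith
  set L : Matrix (Fin n) (Fin n) ℝ := diagonal lam
  have hconj : ‖U * L * Uᵀ‖ ≤ 1 + ε := by
    calc ‖U * L * Uᵀ‖ = ‖T - (T - U * L * Uᵀ)‖ := by rw [sub_sub_cancel]
      _ ≤ ‖T‖ + ‖T - U * L * Uᵀ‖ := norm_sub_le _ _
      _ ≤ 1 + ε := by gcongr
  have hL : ‖L‖ ≤ (1 + ε) / (1 - δ) := by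
    rw [le_div_iff₀ (by linarith)]
    exact (norm_le_of_conj (by linarith) hUorth).trans hconj
  refine ⟨hL, exists_orthogonal_near (by linarith) hUorth, fun V hV hUV => ?_⟩
  have hmain : ‖T - V * L * Vᵀ‖ ≤ ε * (1 + (1 + ε) * (2 + δ) / (N - ε)) := by
    have hfac : N - ε = N * (1 - δ) := by rw [← hδN]; ring
    have h1δ : (0 : ℝ) < 1 - δ := by linarith
    calc ‖T - V * L * Vᵀ‖ = ‖(T - U * L * Uᵀ) + (U * L * Uᵀ - V * L * Vᵀ)‖ := by
          rw [sub_add_sub_cancel]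
      _ ≤ ‖T - U * L * Uᵀ‖ + ‖U * L * Uᵀ - V * L * Vᵀ‖ := norm_add_le _ _
      _ ≤ ε + δ * ((1 + ε) / (1 - δ)) * (2 + δ) :=
          add_le_add hT ((norm_conj_sub_conj_le hV hUV).trans (by gcongr))
      _ = ε * (1 + (1 + ε) * (2 + δ) / (N - ε)) := by
          rw [hfac, ← hδN]; field_simp
  refine ⟨hmain, hmain.trans ?_⟩
  have hle : (1 + ε) * (2 + δ) / (N - ε) ≤ 1 := by
    rw [div_le_one (by linarith)]
    nlinarith
  nlinarith
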